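/- With all heat operators taken with index m = 1, the weak Jacobi form φ_{0,1} satisfies the second-order identity H^{(1)}_{2}(H^{(1)}_{0}(φ_{0,1}))(τ,z) = 10·E₆(τ)·φ_{−2,1}(τ,z) + (5/4)·E₄(τ)·φ_{0,1}(τ,z) for all (τ,z) ∈ ℍ × ℂ; in particular φ_{0,1} does not satisfy a modular differential equation of degree 2 with respect to the heat operator. -/

import Mathlib

/-!
Write `T_k = ((1/2πi) ∂_z)^k ϑ` (`thT`). The series of `ϑ` satisfies the heat equation, so
`∂_τ T_k = πi T_{k+2}`, and `η⁶ φ_{0,1} = −12 (T₀T₂ − T₁²) + E₂ T₀²`. The theorem follows from the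
first-order statement `H_0 φ_{0,1} = −(5/2) E₄ φ_{−2,1}` (`heatMod_phi01`): applying `H_2` to the
right-hand side and using `(1/2πi) E₄' = (E₂E₄ − E₆)/3` gives the claimed combination.

With `(1/2πi) E₂' = (E₂² − E₄)/12` and `(1/2πi) η' = E₂ η / 24`, the first-order statement is a
quadratic relation among `T₀, …, T₄` with coefficients in `E₂, E₄` (`thT_relation`). Splitting
the double series of `ϑ(τ,z)²` according to the parity of `n + m` (`hasSum_dblTerm`) turns every
quadratic expression in this relation into a combination of the two theta series of `(2τ, 2z)`
with characteristics `1/2` and `0`, whose coefficients depend on `τ` only. Two functions span the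
space, so the relation holds for all `z` as soon as it and its second `z`-derivative hold at
`z = 0` (`theta_quartic`).

The two conditions at `z = 0` involve `T₃(τ,0)` and `T₅(τ,0)`. Since `T₁(τ,0)^8` is a cusp form of
weight `12` and level one, it is a nonzero multiple of `η²⁴` (`thT_one_pow_eq`); its logarithmic
derivative gives `T₃(τ,0) = (E₂/4) T₁(τ,0)`, and differentiating again gives `T₅(τ,0)`.
Ramanujan's identities for `E₂'` and `E₄'` hold because the difference of the two sides is a cusp
form of level one and weight less than `12`, hence zero (`eq_zero_of_cusp`).
-/

open Complex Real

noncomputable section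

/-- The Jacobi theta series `ϑ(τ,z) = q^{1/8} ζ^{1/2} ∑_{n∈ℤ} (−1)^n q^{n(n+1)/2} ζ^n`
with `q = e^{2πiτ}`, `ζ = e^{2πiz}`. -/
def thetaJ (τ z : ℂ) : ℂ :=
  Complex.exp (π * I * τ / 4) * Complex.exp (π * I * z) *
    ∑' n : ℤ, (-1 : ℂ) ^ n * Complex.exp (π * I * τ * n * (n + 1)) *
      Complex.exp (2 * π * I * z * n)

/-- The Dedekind eta function `η(τ) = q^{1/24} ∏_{n≥1} (1 − q^n)`. -/
def etaD (τ : ℂ) : ℂ :=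
  Complex.exp (π * I * τ / 12) * ∏' n : ℕ, (1 - Complex.exp (2 * π * I * τ * (n + 1)))

/-- The divisor power sum `σ_k(n) = ∑_{d ∣ n} d^k`. -/
def sigmaD (k n : ℕ) : ℕ := ∑ d ∈ n.divisors, d ^ k

/-- The quasi-modular Eisenstein series `E₂`. -/
def Eis2 (τ : ℂ) : ℂ :=
  1 - 24 * ∑' n : ℕ, (sigmaD 1 (n + 1) : ℂ) * Complex.exp (2 * π * I * τ * (n + 1))

/-- The Eisenstein series `E₄`. -/
def Eis4 (τ : ℂ) : ℂ :=
  1 + 240 * ∑' n : ℕ, (sigmaD 3 (n + 1) : ℂ) * Complex.exp (2 * π * I * τ * (n + 1))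

/-- The Eisenstein series `E₆`. -/
def Eis6 (τ : ℂ) : ℂ :=
  1 - 504 * ∑' n : ℕ, (sigmaD 5 (n + 1) : ℂ) * Complex.exp (2 * π * I * τ * (n + 1))

/-- The heat operator `H^{(m)}φ = (12/(2πi)) ∂φ/∂τ + (3/(4π²m)) ∂²φ/∂z²` of index `m`. -/
def heatOp (m : ℚ) (φ : ℂ → ℂ → ℂ) (τ z : ℂ) : ℂ :=
  12 / (2 * π * I) * deriv (fun t => φ t z) τ
    + 3 / (4 * π ^ 2 * (m : ℂ)) * deriv (deriv (φ τ)) z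

/-- The modular heat operator `H^{(m)}_k φ = H^{(m)}φ − ((2k−1)/2)·E₂·φ`. -/
def heatMod (m k : ℚ) (φ : ℂ → ℂ → ℂ) (τ z : ℂ) : ℂ :=
  heatOp m φ τ z - (2 * (k : ℂ) - 1) / 2 * Eis2 τ * φ τ z

/-- The weak Jacobi form `φ_{−2,1} = ϑ²/η⁶` of weight −2 and index 1. -/
def phim21 (τ z : ℂ) : ℂ := thetaJ τ z ^ 2 / etaD τ ^ 6

/-- The weak Jacobi form `φ_{0,1}` of weight 0 and index 1:
`φ_{0,1} = (3/π²)·(ϑ·∂²ϑ/∂z² − (∂ϑ/∂z)²)/η⁶ + E₂·ϑ²/η⁶`. -/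
def phi01 (τ z : ℂ) : ℂ :=
  3 / (π : ℂ) ^ 2 *
      (thetaJ τ z * deriv (deriv (thetaJ τ)) z - (deriv (thetaJ τ) z) ^ 2) / etaD τ ^ 6
    + Eis2 τ * thetaJ τ z ^ 2 / etaD τ ^ 6

/-! ### Theta series and their derivatives -/

/-- Termwise differentiation of a series of holomorphic functions. Only the terms, not their
derivatives, need a summable bound on `U`, by the Cauchy estimates. -/
lemma hasDerivAt_tsum_of_bound {ι : Type*} {F F' : ι → ℂ → ℂ} {u : ι → ℝ} (hu : Summable u)
    {U : Set ℂ} (hU : IsOpen U) (hF : ∀ n, ∀ w ∈ U, HasDerivAt (F n) (F' n w) w)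
    (hb : ∀ n, ∀ w ∈ U, ‖F n w‖ ≤ u n) {z : ℂ} (hz : z ∈ U) :
    HasDerivAt (fun w => ∑' n, F n w) (∑' n, F' n z) z := by
  have hd : ∀ n, DifferentiableOn ℂ (F n) U := fun n w hw =>
    (hF n w hw).differentiableAt.differentiableWithinAt
  have h1 := (Complex.differentiableOn_tsum_of_summable_norm hu hd hU hb).differentiableAt
    (hU.mem_nhds hz)
  have h2 := Complex.hasSum_deriv_of_summable_norm hu hd hU hb hz
  have h3 : (fun n => deriv (F n) z) = fun n => F' n z := by
    ext n; exact (hF n z hz).deriv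
  rw [h3] at h2
  rw [h2.tsum_eq]
  exact h1.hasDerivAt

/-- The term `(n+s)^k e^{πiτ(n+s)² + 2πi(n+s)z}` of the `k`-th normalised `z`-derivative of a theta
series with characteristic `s`. -/
def thTerm (s : ℝ) (k : ℕ) (τ z : ℂ) (n : ℤ) : ℂ :=
  ((n : ℂ) + s) ^ k * Complex.exp (π * I * τ * ((n : ℂ) + s) ^ 2 + 2 * π * I * ((n : ℂ) + s) * z)

/-- A summable majorant of `thTerm s k τ z` for `0 ≤ s ≤ 1/2`, `T ≤ Im τ` and `|Im z| ≤ S`. -/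
def thBound (k : ℕ) (S T : ℝ) (n : ℤ) : ℝ :=
  (|(n : ℝ)| + 1) ^ k * (Real.exp (2 * π * S) * Real.exp (-π * (T / 4 * n ^ 2 - 2 * S * |(n : ℝ)|)))

lemma thBound_summable (k : ℕ) (S : ℝ) {T : ℝ} (hT : 0 < T) : Summable (thBound k S T) := by
  have h := fun j => summable_pow_mul_jacobiTheta₂_term_bound S (T := T / 4) (by positivity) j
  have := (((h k).add (h 0)).mul_left (2 ^ (k - 1) * Real.exp (2 * π * S)))
  refine Summable.of_nonneg_of_le (fun n => ?_) (fun n => ?_) this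
  · unfold thBound; positivity
  · unfold thBound
    have h1 := add_pow_le (abs_nonneg (n : ℝ)) zero_le_one k
    rw [one_pow] at h1
    calc _ ≤ (2 ^ (k - 1) * (|(n : ℝ)| ^ k + 1)) * (Real.exp (2 * π * S) *
          Real.exp (-π * (T / 4 * n ^ 2 - 2 * S * |(n : ℝ)|))) := by gcongr
      _ = _ := by push_cast; ring

lemma thTerm_bound {s : ℝ} (hs : 0 ≤ s) (hs' : s ≤ 1 / 2) (k : ℕ) {S T : ℝ} (hT : 0 < T) {τ z : ℂ}
    (hz : |z.im| ≤ S) (hτ : T ≤ τ.im) (n : ℤ) : ‖thTerm s k τ z n‖ ≤ thBound k S T n := by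
  have hS : 0 ≤ S := (abs_nonneg _).trans hz
  have hx : ((n : ℂ) + s) = ((n + s : ℝ) : ℂ) := by push_cast; rfl
  have hub : |(n + s : ℝ)| ≤ |(n : ℝ)| + 1 := by
    refine (abs_add_le _ _).trans ?_
    rw [abs_of_nonneg hs]; linarith
  have hlb : |(n : ℝ)| / 2 ≤ |(n + s : ℝ)| := by
    rcases le_or_gt 0 n with h | h
    · have : (0 : ℝ) ≤ n := by exact_mod_cast h
      rw [abs_of_nonneg this, abs_of_nonneg (by linarith)]; linarith
    · have : (n : ℝ) ≤ -1 := by exact_mod_cast (by omega : n ≤ -1)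
      rw [abs_of_neg (by linarith), abs_of_neg (by linarith)]; linarith
  have hsq : (n : ℝ) ^ 2 / 4 ≤ (n + s) ^ 2 := by
    have := mul_self_le_mul_self (by positivity) hlb
    rw [← sq, ← sq, div_pow, sq_abs, sq_abs] at this
    linarith
  unfold thTerm thBound
  rw [hx, norm_mul, norm_pow, Complex.norm_real, Complex.norm_exp, ← Real.exp_add,
    Real.norm_eq_abs]
  gcongr
  have e : (π * I * τ * ((n + s : ℝ) : ℂ) ^ 2 + 2 * π * I * ((n + s : ℝ) : ℂ) * z).re
      = -π * (τ.im * (n + s) ^ 2) - 2 * π * ((n + s) * z.im) := by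
    rw [← ofReal_pow]
    simp only [add_re, mul_re, mul_im, ofReal_re, ofReal_im, I_re, I_im, re_ofNat, im_ofNat]
    ring
  rw [e]
  have h1 : T * ((n : ℝ) ^ 2 / 4) ≤ τ.im * (n + s) ^ 2 := by gcongr; linarith
  have h2 : -((n + s) * z.im) ≤ (|(n : ℝ)| + 1) * S := by
    refine (neg_le_abs _).trans ?_
    rw [abs_mul]; gcongr
  have := mul_le_mul_of_nonneg_left h1 pi_pos.le
  have := mul_le_mul_of_nonneg_left h2 pi_pos.le
  linarith

lemma thTerm_summable {s : ℝ} (hs : 0 ≤ s) (hs' : s ≤ 1 / 2) (k : ℕ) {τ : ℂ} (hτ : 0 < τ.im)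
    (z : ℂ) : Summable fun n => ‖thTerm s k τ z n‖ :=
  Summable.of_nonneg_of_le (fun _ => norm_nonneg _)
    (thTerm_bound hs hs' k hτ le_rfl le_rfl) (thBound_summable k _ hτ)

/-- `T_k = ((1/2πi) ∂_z)^k ϑ`, written as a series. -/
def thT (k : ℕ) (τ z : ℂ) : ℂ := ∑' n : ℤ, (-1 : ℂ) ^ n * thTerm (1 / 2) k τ z n

lemma thT_bound (k : ℕ) {S T : ℝ} (hT : 0 < T) {τ z : ℂ}
    (hz : |z.im| ≤ S) (hτ : T ≤ τ.im) (n : ℤ) :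
    ‖(-1 : ℂ) ^ n * thTerm (1 / 2) k τ z n‖ ≤ thBound k S T n := by
  rw [norm_mul, norm_zpow, norm_neg, norm_one, one_zpow, one_mul]
  exact thTerm_bound (by norm_num) le_rfl k hT hz hτ n

lemma thT_hasDerivAt_z (k : ℕ) {τ : ℂ} (hτ : 0 < τ.im) (z : ℂ) :
    HasDerivAt (thT k τ) (2 * π * I * thT (k + 1) τ z) z := by
  have := hasDerivAt_tsum_of_bound (F := fun n w => (-1 : ℂ) ^ n * thTerm (1 / 2) k τ w n)
    (F' := fun n w => 2 * π * I * ((-1 : ℂ) ^ n * thTerm (1 / 2) (k + 1) τ w n))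
    (thBound_summable k (|z.im| + 1) hτ) (U := {w : ℂ | |w.im| < |z.im| + 1})
    (isOpen_lt (by fun_prop) (by fun_prop)) (fun n w _ => ?_)
    (fun n w hw => thT_bound k hτ (le_of_lt hw) le_rfl n) (z := z) (by simp)
  · rw [tsum_mul_left] at this
    exact this
  · unfold thTerm
    have h : HasDerivAt (fun w : ℂ => π * I * τ * ((n : ℂ) + (1 / 2 : ℝ)) ^ 2
        + 2 * π * I * ((n : ℂ) + (1 / 2 : ℝ)) * w) (2 * π * I * ((n : ℂ) + (1 / 2 : ℝ))) w := by
      simpa using ((hasDerivAt_id w).const_mul (2 * π * I * ((n : ℂ) + (1 / 2 : ℝ)))).const_add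
        (π * I * τ * ((n : ℂ) + (1 / 2 : ℝ)) ^ 2)
    convert! (h.cexp.const_mul (((n : ℂ) + (1 / 2 : ℝ)) ^ k)).const_mul ((-1 : ℂ) ^ n) using 1
    ring

/-- The heat equation for `ϑ` and its `z`-derivatives. -/
lemma thT_hasDerivAt_τ (k : ℕ) {τ : ℂ} (hτ : 0 < τ.im) (z : ℂ) :
    HasDerivAt (fun t => thT k t z) (π * I * thT (k + 2) τ z) τ := by
  have := hasDerivAt_tsum_of_bound (F := fun n w => (-1 : ℂ) ^ n * thTerm (1 / 2) k w z n)
    (F' := fun n w => π * I * ((-1 : ℂ) ^ n * thTerm (1 / 2) (k + 2) w z n))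
    (thBound_summable k |z.im| (half_pos hτ)) (U := {w : ℂ | τ.im / 2 < w.im})
    (isOpen_lt (by fun_prop) (by fun_prop)) (fun n w _ => ?_)
    (fun n w hw => thT_bound k (half_pos hτ) le_rfl (le_of_lt hw) n) (z := τ) (by simpa)
  · rw [tsum_mul_left] at this
    exact this
  · unfold thTerm
    have h : HasDerivAt (fun w : ℂ => π * I * w * ((n : ℂ) + (1 / 2 : ℝ)) ^ 2
        + 2 * π * I * ((n : ℂ) + (1 / 2 : ℝ)) * z) (π * I * ((n : ℂ) + (1 / 2 : ℝ)) ^ 2) w := by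
      simpa using (((hasDerivAt_id w).const_mul (π * I)).mul_const (((n : ℂ) + (1 / 2 : ℝ)) ^ 2)).add_const
        (2 * π * I * ((n : ℂ) + (1 / 2 : ℝ)) * z)
    convert! (h.cexp.const_mul (((n : ℂ) + (1 / 2 : ℝ)) ^ k)).const_mul ((-1 : ℂ) ^ n) using 1
    ring

lemma thetaJ_eq (τ z : ℂ) : thetaJ τ z = thT 0 τ z := by
  unfold thetaJ thT thTerm
  rw [← tsum_mul_left]
  refine tsum_congr fun n => ?_
  rw [show ∀ a b c d e : ℂ, a * b * (c * d * e) = c * (a * b * d * e) by intros; ring,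
    ← Complex.exp_add, ← Complex.exp_add, ← Complex.exp_add, pow_zero, one_mul]
  congr 2
  push_cast
  ring

lemma thT_neg (k : ℕ) (τ z : ℂ) : thT k τ (-z) = (-1) ^ (k + 1) * thT k τ z := by
  unfold thT
  rw [← tsum_mul_left, ← ((Equiv.neg ℤ).trans (Equiv.subRight 1)).tsum_eq]
  refine tsum_congr fun n => ?_
  simp only [Equiv.trans_apply, Equiv.neg_apply, Equiv.subRight_apply, thTerm]
  rw [show (-n - 1 : ℤ) = -(n + 1) by ring, zpow_neg, zpow_add_one₀ (by norm_num),
    show ((-(n + 1) : ℤ) : ℂ) + (1 / 2 : ℝ) = (-1) * ((n : ℂ) + (1 / 2 : ℝ)) by push_cast; ring,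
    mul_pow, mul_pow, pow_succ (-1 : ℂ) k]
  have : ((-1 : ℂ) ^ n * -1)⁻¹ = (-1) ^ n * -1 := by
    rcases Int.even_or_odd n with h | h
    · rw [h.neg_one_zpow]; norm_num
    · rw [h.neg_one_zpow]; norm_num
  rw [this]
  ring_nf

lemma thT_zero_of_even {k : ℕ} (hk : Even k) (τ : ℂ) : thT k τ 0 = 0 := by
  have := thT_neg k τ 0
  rw [neg_zero, (hk.add_one).neg_one_pow] at this
  linear_combination this / 2

/-! ### Products of two theta series -/

/-- The theta series `∑_n (2(n+s))^j e^{2πiτ(n+s)² + 4πi(n+s)z}` at `(2τ, 2z)`. The factor `2^j` makes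
`thG s j` the `j`-th normalised `z`-derivative of `thG s 0`. -/
def thG (s : ℝ) (j : ℕ) (τ z : ℂ) : ℂ := ∑' n : ℤ, 2 ^ j * thTerm s j (2 * τ) (2 * z) n

/-- Pairs `(n, m)` of integers split by the parity of `n + m`: the odd ones are
`(p + r, p − r − 1)`, the even ones `(p + r, p − r)`. -/
def parityEquiv : (ℤ × ℤ) ⊕ (ℤ × ℤ) ≃ ℤ × ℤ :=
  Equiv.ofBijective
    (Sum.elim (fun x => (x.1 + x.2, x.1 - x.2 - 1)) (fun x => (x.1 + x.2, x.1 - x.2))) <| by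
    constructor
    · rintro (⟨p, r⟩ | ⟨p, r⟩) (⟨p', r'⟩ | ⟨p', r'⟩) h <;>
        simp only [Sum.elim_inl, Sum.elim_inr, Prod.mk.injEq] at h
      · obtain rfl : p = p' := by omega
        obtain rfl : r = r' := by omega
        rfl
      · omega
      · omega
      · obtain rfl : p = p' := by omega
        obtain rfl : r = r' := by omega
        rfl
    · rintro ⟨n, m⟩
      rcases Int.emod_two_eq_zero_or_one (n + m) with h | h
      · refine ⟨Sum.inr ((n + m) / 2, (n - m) / 2), ?_⟩
        simp only [Sum.elim_inr, Prod.mk.injEq]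
        omega
      · refine ⟨Sum.inl ((n + m + 1) / 2, (n - m - 1) / 2), ?_⟩
        simp only [Sum.elim_inl, Prod.mk.injEq]
        omega

lemma parityEquiv_inl (p r : ℤ) : parityEquiv (Sum.inl (p, r)) = (p + r, p - r - 1) := rfl

lemma parityEquiv_inr (p r : ℤ) : parityEquiv (Sum.inr (p, r)) = (p + r, p - r) := rfl

/-- The term of index `(n, m)` in the double series of `ϑ(τ,z)²`, weighted by `(n+m+1)^j (n−m)^k`. The
first weight is a `z`-derivative of the product, the second a derivative in the difference of the
two arguments of `ϑ`. -/
def dblTerm (j k : ℕ) (τ z : ℂ) (x : ℤ × ℤ) : ℂ :=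
  ((x.1 : ℂ) + x.2 + 1) ^ j * ((x.1 : ℂ) - x.2) ^ k *
    (((-1 : ℂ) ^ x.1 * thTerm (1 / 2) 0 τ z x.1) * ((-1 : ℂ) ^ x.2 * thTerm (1 / 2) 0 τ z x.2))

lemma thG_summable {s : ℝ} (hs : 0 ≤ s) (hs' : s ≤ 1 / 2) (j : ℕ) {τ : ℂ} (hτ : 0 < τ.im) (z : ℂ) :
    Summable fun n => ‖2 ^ j * thTerm s j (2 * τ) (2 * z) n‖ := by
  simp_rw [norm_mul]
  exact (thTerm_summable hs hs' j (by simpa using hτ) _).mul_left _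

lemma hasSum_thG_mul {s s' : ℝ} (hs : 0 ≤ s) (hs' : s ≤ 1 / 2) (ht : 0 ≤ s') (ht' : s' ≤ 1 / 2)
    (j k : ℕ) {τ : ℂ} (hτ : 0 < τ.im) (z z' : ℂ) :
    HasSum (fun x : ℤ × ℤ => (2 ^ j * thTerm s j (2 * τ) (2 * z) x.1) *
      (2 ^ k * thTerm s' k (2 * τ) (2 * z') x.2)) (thG s j τ z * thG s' k τ z') := by
  have h1 := thG_summable hs hs' j hτ z
  have h2 := thG_summable ht ht' k hτ z'
  have := (summable_mul_of_summable_norm h1 h2).hasSum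
  rwa [← tsum_mul_tsum_of_summable_norm h1 h2] at this

/-- The product formula: in the variables of `parityEquiv` the exponents separate, and the double
series becomes a function of `z` times a theta constant for each parity class. -/
lemma hasSum_dblTerm (j k : ℕ) {τ : ℂ} (hτ : 0 < τ.im) (z : ℂ) :
    HasSum (dblTerm j k τ z)
      (thG (1 / 2) j τ z * thG 0 k τ 0 - thG 0 j τ z * thG (1 / 2) k τ 0) := by
  rw [← parityEquiv.hasSum_iff, sub_eq_neg_add]
  have hl := (hasSum_thG_mul (s := 0) (s' := 1 / 2) le_rfl (by norm_num) (by norm_num) le_rfl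
    j k hτ z 0).neg
  have hr := hasSum_thG_mul (s := 1 / 2) (s' := 0) (by norm_num) le_rfl le_rfl (by norm_num)
    j k hτ z 0
  refine HasSum.sum ?_ ?_
  · convert! hl using 1
    ext ⟨p, r⟩
    simp only [Function.comp, parityEquiv_inl, dblTerm, thTerm]
    have hsgn : (-1 : ℂ) ^ (p + r) * (-1 : ℂ) ^ (p - r - 1) = -1 := by
      rw [← zpow_add₀ (by norm_num), Odd.neg_one_zpow ⟨p - 1, by ring⟩]
    rw [show ∀ a b c d e f : ℂ, a * b * ((c * d) * (e * f)) = (c * e) * (a * b * (d * f)) by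
      intros; ring, hsgn]
    simp only [pow_zero, one_mul]
    rw [← Complex.exp_add]
    rw [show ∀ a b c d e f : ℂ, -(a * (b * c) * (d * (e * f)))
      = -1 * ((a * b) * (d * e) * (c * f)) by intros; ring, ← Complex.exp_add, ← mul_pow, ← mul_pow]
    push_cast
    ring_nf
  · convert! hr using 1
    ext ⟨p, r⟩
    simp only [Function.comp, parityEquiv_inr, dblTerm, thTerm]
    have hsgn : (-1 : ℂ) ^ (p + r) * (-1 : ℂ) ^ (p - r) = 1 := by
      rw [← zpow_add₀ (by norm_num), Even.neg_one_zpow ⟨p, by ring⟩]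
    rw [show ∀ a b c d e f : ℂ, a * b * ((c * d) * (e * f)) = (c * e) * (a * b * (d * f)) by
      intros; ring, hsgn]
    simp only [pow_zero, one_mul]
    rw [← Complex.exp_add]
    rw [show ∀ a b c d e f : ℂ, (a * (b * c) * (d * (e * f)))
      = ((a * b) * (d * e) * (c * f)) by intros; ring, ← Complex.exp_add, ← mul_pow, ← mul_pow]
    push_cast
    ring_nf

lemma hasSum_thT_mul (i j : ℕ) {τ : ℂ} (hτ : 0 < τ.im) (z : ℂ) :
    HasSum (fun x : ℤ × ℤ => ((x.1 : ℂ) + 1 / 2) ^ i * ((x.2 : ℂ) + 1 / 2) ^ j *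
    (((-1 : ℂ) ^ x.1 * thTerm (1 / 2) 0 τ z x.1) * ((-1 : ℂ) ^ x.2 * thTerm (1 / 2) 0 τ z x.2)))
    (thT i τ z * thT j τ z) := by
  have h : ∀ i, Summable fun n => ‖(-1 : ℂ) ^ n * thTerm (1 / 2) i τ z n‖ := fun i =>
    Summable.of_nonneg_of_le (fun _ => norm_nonneg _)
      (thT_bound i hτ le_rfl le_rfl) (thBound_summable i _ hτ)
  have := (summable_mul_of_summable_norm (h i) (h j)).hasSum
  rw [← tsum_mul_tsum_of_summable_norm (h i) (h j)] at this
  convert! this using 1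
  ext x
  simp only [thTerm]
  push_cast
  ring

/-- The sum of the double series with terms `dblTerm j k τ z`; see `hasSum_dblTerm`. As a function of
`z`, `thB j k` is the `j`-th normalised derivative of `thB 0 k`. -/
def thB (j k : ℕ) (τ z : ℂ) : ℂ := thG (1 / 2) j τ z * thG 0 k τ 0 - thG 0 j τ z * thG (1 / 2) k τ 0

lemma thB_zero_zero {τ : ℂ} (hτ : 0 < τ.im) (z : ℂ) : thB 0 0 τ z = thT 0 τ z ^ 2 := by
  refine (hasSum_dblTerm 0 0 hτ z).unique ?_
  rw [sq]
  refine (hasSum_thT_mul 0 0 hτ z).congr_fun fun x => ?_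
  simp only [dblTerm]; ring

lemma thB_zero_two {τ : ℂ} (hτ : 0 < τ.im) (z : ℂ) : thB 0 2 τ z = 2 * (thT 0 τ z * thT 2 τ z - thT 1 τ z ^ 2) := by
  refine (hasSum_dblTerm 0 2 hτ z).unique ?_
  convert! ((hasSum_thT_mul 0 2 hτ z).add (hasSum_thT_mul 2 0 hτ z)).sub
    ((hasSum_thT_mul 1 1 hτ z).mul_left 2) using 1
  · ext x; simp only [dblTerm]; ring
  · ring

lemma thB_zero_four {τ : ℂ} (hτ : 0 < τ.im) (z : ℂ) : thB 0 4 τ z = 2 * (thT 0 τ z * thT 4 τ z) - 8 * (thT 1 τ z * thT 3 τ z)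
    + 6 * thT 2 τ z ^ 2 := by
  refine (hasSum_dblTerm 0 4 hτ z).unique ?_
  convert! (((hasSum_thT_mul 0 4 hτ z).add (hasSum_thT_mul 4 0 hτ z)).sub
    (((hasSum_thT_mul 1 3 hτ z).add (hasSum_thT_mul 3 1 hτ z)).mul_left 4)).add
    ((hasSum_thT_mul 2 2 hτ z).mul_left 6) using 1
  · ext x; simp only [dblTerm]; ring
  · ring

lemma thB_two_zero {τ : ℂ} (hτ : 0 < τ.im) (z : ℂ) : thB 2 0 τ z = 2 * (thT 0 τ z * thT 2 τ z + thT 1 τ z ^ 2) := by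
  refine (hasSum_dblTerm 2 0 hτ z).unique ?_
  convert! ((hasSum_thT_mul 0 2 hτ z).add (hasSum_thT_mul 2 0 hτ z)).add
    ((hasSum_thT_mul 1 1 hτ z).mul_left 2) using 1
  · ext x; simp only [dblTerm]; ring
  · ring

lemma thB_two_two {τ : ℂ} (hτ : 0 < τ.im) (z : ℂ) : thB 2 2 τ z = 2 * (thT 0 τ z * thT 4 τ z) - 2 * thT 2 τ z ^ 2 := by
  refine (hasSum_dblTerm 2 2 hτ z).unique ?_
  convert! ((hasSum_thT_mul 0 4 hτ z).add (hasSum_thT_mul 4 0 hτ z)).sub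
    ((hasSum_thT_mul 2 2 hτ z).mul_left 2) using 1
  · ext x; simp only [dblTerm]; ring
  · ring

lemma thB_two_four {τ : ℂ} (hτ : 0 < τ.im) (z : ℂ) : thB 2 4 τ z = 2 * (thT 0 τ z * thT 6 τ z) - 4 * (thT 1 τ z * thT 5 τ z)
    - 2 * (thT 2 τ z * thT 4 τ z) + 4 * thT 3 τ z ^ 2 := by
  refine (hasSum_dblTerm 2 4 hτ z).unique ?_
  convert! ((((hasSum_thT_mul 0 6 hτ z).add (hasSum_thT_mul 6 0 hτ z)).sub
    (((hasSum_thT_mul 1 5 hτ z).add (hasSum_thT_mul 5 1 hτ z)).mul_left 2)).sub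
    ((hasSum_thT_mul 2 4 hτ z).add (hasSum_thT_mul 4 2 hτ z))).add
    ((hasSum_thT_mul 3 3 hτ z).mul_left 4) using 1
  · ext x; simp only [dblTerm]; ring
  · ring

/-- The relation is a combination of `thB 0 4`, `thB 0 2` and `thB 0 0`, which lie in the span of
`thG (1/2) 0 τ` and `thG 0 0 τ`. Its coefficients in this span solve a homogeneous `2 × 2` system,
given by the value (`A0`) and the second derivative (`A2`) at `z = 0`; the determinant is `thB 0 2 τ 0 =
−2 T₁(τ,0)²`, which is nonzero. -/
lemma theta_quartic {τ : ℂ} (hτ : 0 < τ.im) (e c : ℂ) (ht : thT 1 τ 0 ≠ 0)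
    (h3 : thT 3 τ 0 = e / 4 * thT 1 τ 0)
    (h5 : 36 * thT 1 τ 0 * thT 5 τ 0 - 36 * thT 3 τ 0 ^ 2 + c * thT 1 τ 0 ^ 2 = 0) (z : ℂ) :
    -108 * thT 2 τ z ^ 2 - 36 * (thT 0 τ z * thT 4 τ z) + 144 * (thT 1 τ z * thT 3 τ z)
      + 36 * e * (thT 0 τ z * thT 2 τ z - thT 1 τ z ^ 2) + c * thT 0 τ z ^ 2 = 0 := by
  have e0 := thT_zero_of_even (k := 0) (by decide) τ
  have e2 := thT_zero_of_even (k := 2) (by decide) τ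
  have e4 := thT_zero_of_even (k := 4) (by decide) τ
  have b00 := thB_zero_zero hτ
  have b02 := thB_zero_two hτ
  have b04 := thB_zero_four hτ
  have b20 := thB_two_zero hτ 0
  have b22 := thB_two_two hτ 0
  have b24 := thB_two_four hτ 0
  have A0 : -18 * thB 0 4 τ 0 + 18 * e * thB 0 2 τ 0 + c * thB 0 0 τ 0 = 0 := by
    rw [b00, b02, b04, e0, e2, e4, h3]; ring
  have A2 : -18 * thB 2 4 τ 0 + 18 * e * thB 2 2 τ 0 + c * thB 2 0 τ 0 = 0 := by
    rw [b20, b22, b24, e0, e2, e4]; linear_combination 2 * h5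
  have W : thB 0 2 τ 0 ≠ 0 := by
    rw [b02, e0, e2]; simpa using ht
  have key : -18 * thB 0 4 τ z + 18 * e * thB 0 2 τ z + c * thB 0 0 τ z = 0 := by
    unfold thB at A0 A2 W ⊢
    generalize thG 0 0 τ 0 = g0 at *
    generalize thG 0 2 τ 0 = g2 at *
    generalize thG 0 4 τ 0 = g4 at *
    generalize thG (1 / 2) 0 τ 0 = k0 at *
    generalize thG (1 / 2) 2 τ 0 = k2 at *
    generalize thG (1 / 2) 4 τ 0 = k4 at *
    set f := -18 * g4 + 18 * e * g2 + c * g0 with hf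
    set h := -18 * k4 + 18 * e * k2 + c * k0 with hh
    have r0 : k0 * f - g0 * h = 0 := by rw [hf, hh]; linear_combination A0
    have r2 : k2 * f - g2 * h = 0 := by rw [hf, hh]; linear_combination A2
    have f0 : f = 0 := by
      have : (k0 * g2 - g0 * k2) * f = 0 := by linear_combination g2 * r0 - g0 * r2
      exact (mul_eq_zero.mp this).resolve_left W
    have h0 : h = 0 := by
      have : (k0 * g2 - g0 * k2) * h = 0 := by linear_combination k2 * r0 - k0 * r2
      exact (mul_eq_zero.mp this).resolve_left W
    linear_combination (thG (1 / 2) 0 τ z) * f0 - (thG 0 0 τ z) * h0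
  rw [b00, b02, b04] at key
  linear_combination key

/-! ### Level-one cusp forms -/

open SlashInvariantForm MatrixGroups ModularForm Filter Topology in
/-- The cusp form of weight `k` and level one given by a holomorphic function on `ℍ` that transforms
correctly under `T` and `S` and tends to `0` at `i∞`. Functions are taken on `ℂ`, and only their values on
`ℍ` matter. -/
def mkCusp (k : ℤ) (f : ℂ → ℂ) (hd : ∀ τ : ℂ, 0 < τ.im → DifferentiableAt ℂ f τ)
    (hT : ∀ τ : ℂ, 0 < τ.im → f (τ + 1) = f τ)
    (hS : ∀ τ : ℂ, 0 < τ.im → f (-1 / τ) = τ ^ k * f τ)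
    (h0 : Tendsto f (comap Complex.im atTop) (𝓝 0)) : CuspForm 𝒮ℒ k :=
  have hS' : ((fun z : UpperHalfPlane => f z) ∣[k] ModularGroup.S) = fun z : UpperHalfPlane => f z := by
    ext z
    have hz : (z : ℂ) ≠ 0 := z.ne_zero
    rw [ModularForm.SL_slash_apply, UpperHalfPlane.modular_S_smul, ModularGroup.denom_S]
    have : f (-(z : ℂ))⁻¹ = (z : ℂ) ^ k * f z := by
      rw [← hS z z.2]; congr 1; field_simp
    simp only [this, zpow_neg]
    field_simp
  have hT' : ((fun z : UpperHalfPlane => f z) ∣[k] ModularGroup.T) = fun z : UpperHalfPlane => f z := by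
    ext z
    rw [ModularForm.SL_slash_apply, UpperHalfPlane.modular_T_smul, ModularGroup.denom_apply]
    have : f ((1 : ℂ) + z) = f z := by rw [add_comm]; exact hT z z.2
    simp [ModularGroup.coe_T, this]
  { toFun := fun z => f z
    slash_action_eq' A hA := by
      obtain ⟨A, rfl⟩ := hA
      exact slash_action_generators_SL2Z hS' hT' A
    holo' := by
      rw [UpperHalfPlane.mdifferentiable_iff]
      refine .congr (fun z hz ↦ (hd z hz).differentiableWithinAt) fun z hz ↦ ?_
      simp [UpperHalfPlane.ofComplex_apply_of_im_pos hz]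
    zero_at_cusps' hc := by
      rw [Subgroup.IsArithmetic.isCusp_iff_isCusp_SL2Z] at hc
      rw [OnePoint.isZeroAt_iff_forall_SL2Z hc]
      intro γ _
      rw [slash_action_generators_SL2Z hS' hT']
      refine h0.comp ?_
      rw [UpperHalfPlane.atImInfty, tendsto_comap_iff]
      exact tendsto_comap }

open Filter Topology in
/-- There is no nonzero cusp form of level one and weight less than `12`. -/
lemma eq_zero_of_cusp {k : ℤ} (hk : k < 12) (f : ℂ → ℂ)
    (hd : ∀ τ : ℂ, 0 < τ.im → DifferentiableAt ℂ f τ)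
    (hT : ∀ τ : ℂ, 0 < τ.im → f (τ + 1) = f τ)
    (hS : ∀ τ : ℂ, 0 < τ.im → f (-1 / τ) = τ ^ k * f τ)
    (h0 : Tendsto f (comap Complex.im atTop) (𝓝 0)) {τ : ℂ} (hτ : 0 < τ.im) : f τ = 0 := by
  have h := rank_zero_iff_forall_zero.mp (CuspForm.rank_eq_zero_of_weight_lt_twelve hk)
    (mkCusp k f hd hT hS h0)
  exact congrArg (fun g : CuspForm _ k => g ⟨τ, hτ⟩) h

open Filter Topology in
/-- Cusp forms of level one and weight `12` are multiples of the discriminant `η²⁴`. -/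
lemma eq_smul_eta_of_cusp (f : ℂ → ℂ)
    (hd : ∀ τ : ℂ, 0 < τ.im → DifferentiableAt ℂ f τ)
    (hT : ∀ τ : ℂ, 0 < τ.im → f (τ + 1) = f τ)
    (hS : ∀ τ : ℂ, 0 < τ.im → f (-1 / τ) = τ ^ (12 : ℤ) * f τ)
    (h0 : Tendsto f (comap Complex.im atTop) (𝓝 0)) :
    ∃ c : ℂ, ∀ τ : ℂ, 0 < τ.im → f τ = c * ModularForm.eta τ ^ 24 := by
  obtain ⟨c, hc⟩ := CuspForm.exists_smul_discriminant_of_weight_eq_twelve (mkCusp 12 f hd hT hS h0)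
  refine ⟨c, fun τ hτ => ?_⟩
  exact (congrArg (fun g : CuspForm _ 12 => g ⟨τ, hτ⟩) hc).symm

/-! ### `q`-series -/

/-- The `q`-series `∑_{n≥0} a_n q^{n+1}` without constant term. -/
def qSer (a : ℕ → ℂ) (τ : ℂ) : ℂ := ∑' n : ℕ, a n * Complex.exp (2 * π * I * τ * (n + 1))

lemma norm_qexp (τ : ℂ) (n : ℕ) :
    ‖Complex.exp (2 * π * I * τ * (n + 1))‖ = Real.exp (-2 * π * τ.im) ^ (n + 1) := by
  rw [Complex.norm_exp, ← Real.exp_nat_mul]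
  congr 1
  have : (2 * π * I * τ * (n + 1) : ℂ) = ((2 * π * (n + 1) : ℝ) : ℂ) * (I * τ) := by push_cast; ring
  rw [this, Complex.re_ofReal_mul]
  simp
  ring

lemma qSer_bound {a : ℕ → ℂ} {C : ℝ} {d : ℕ} (ha : ∀ n, ‖a n‖ ≤ C * ((n + 1 : ℕ) : ℝ) ^ d)
    {T : ℝ} {τ : ℂ} (hτ : T ≤ τ.im) (n : ℕ) :
    ‖a n * Complex.exp (2 * π * I * τ * (n + 1))‖
      ≤ C * (((n + 1 : ℕ) : ℝ) ^ d * Real.exp (-2 * π * T) ^ (n + 1)) := by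
  rw [norm_mul, norm_qexp, ← mul_assoc]
  have := (norm_nonneg _).trans (ha n)
  gcongr ?_ * ?_ ^ _
  · exact ha n
  · apply Real.exp_le_exp.mpr; nlinarith [pi_pos]

lemma qSer_bound_summable (C : ℝ) (d : ℕ) {T : ℝ} (hT : 0 < T) :
    Summable fun n : ℕ => C * (((n + 1 : ℕ) : ℝ) ^ d * Real.exp (-2 * π * T) ^ (n + 1)) := by
  refine Summable.mul_left _ ?_
  have h : ‖Real.exp (-2 * π * T)‖ < 1 := by
    rw [Real.norm_eq_abs, Real.abs_exp, Real.exp_lt_one_iff]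
    nlinarith [mul_pos pi_pos hT]
  have := summable_pow_mul_geometric_of_norm_lt_one d h
  exact (summable_nat_add_iff (f := fun n : ℕ => (n : ℝ) ^ d * Real.exp (-2 * π * T) ^ n) 1).mpr this

lemma qSer_hasDerivAt {a : ℕ → ℂ} {C : ℝ} {d : ℕ} (ha : ∀ n, ‖a n‖ ≤ C * ((n + 1 : ℕ) : ℝ) ^ d)
    {τ : ℂ} (hτ : 0 < τ.im) :
    HasDerivAt (qSer a) (2 * π * I * qSer (fun n => a n * (n + 1)) τ) τ := by
  have := hasDerivAt_tsum_of_bound (F := fun n w => a n * Complex.exp (2 * π * I * w * (n + 1)))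
    (F' := fun n w => 2 * π * I * (a n * (n + 1) * Complex.exp (2 * π * I * w * (n + 1))))
    (qSer_bound_summable C d (half_pos hτ)) (U := {w : ℂ | τ.im / 2 < w.im})
    (isOpen_lt (by fun_prop) (by fun_prop)) (fun n w _ => ?_)
    (fun n w hw => qSer_bound ha (le_of_lt hw) n) (z := τ) (by simpa)
  · rw [tsum_mul_left] at this
    exact this
  · have h : HasDerivAt (fun w : ℂ => 2 * π * I * w * (n + 1)) (2 * π * I * (n + 1)) w := by
      simpa using ((hasDerivAt_id w).const_mul (2 * π * I)).mul_const ((n : ℂ) + 1)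
    convert! h.cexp.const_mul (a n) using 1
    ring

open Filter Topology in
lemma qSer_tendsto {a : ℕ → ℂ} {C : ℝ} {d : ℕ} (ha : ∀ n, ‖a n‖ ≤ C * ((n + 1 : ℕ) : ℝ) ^ d) :
    Tendsto (qSer a) (comap Complex.im atTop) (𝓝 0) := by
  have := tendsto_tsum_of_dominated_convergence (𝓕 := comap Complex.im atTop)
    (f := fun τ n => a n * Complex.exp (2 * π * I * τ * (n + 1))) (g := fun _ : ℕ => (0 : ℂ))
    (qSer_bound_summable C d one_pos) (fun n => ?_) ?_
  · rw [tsum_zero] at this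
    exact this
  · rw [tendsto_zero_iff_norm_tendsto_zero]
    simp_rw [norm_mul, norm_qexp]
    rw [← mul_zero ‖a n‖]
    refine Tendsto.const_mul _ ?_
    rw [show (0 : ℝ) = 0 ^ (n + 1) from (zero_pow (Nat.succ_ne_zero n)).symm]
    refine Tendsto.pow ?_ _
    refine Real.tendsto_exp_atBot.comp ?_
    refine Tendsto.const_mul_atTop_of_neg (by linarith [pi_pos]) tendsto_comap
  · filter_upwards [preimage_mem_comap (Ici_mem_atTop (1 : ℝ))] with τ hτ n
    exact qSer_bound ha hτ n

lemma qSer_periodic (a : ℕ → ℂ) (τ : ℂ) : qSer a (τ + 1) = qSer a τ := by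
  unfold qSer
  refine tsum_congr fun n => ?_
  congr 1
  rw [show (2 * π * I * (τ + 1) * (n + 1) : ℂ) = 2 * π * I * τ * (n + 1) + (n + 1 : ℕ) * (2 * π * I) by
    push_cast; ring]
  exact (Complex.exp_periodic.nat_mul (n + 1)) _

lemma norm_sigmaD_le (k n : ℕ) : ‖(sigmaD k (n + 1) : ℂ)‖ ≤ 1 * ((n + 1 : ℕ) : ℝ) ^ (k + 1) := by
  have h : sigmaD k (n + 1) = ArithmeticFunction.sigma k (n + 1) := by
    simp [sigmaD, ArithmeticFunction.sigma_apply]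
  rw [h, Complex.norm_natCast, one_mul]
  exact_mod_cast ArithmeticFunction.sigma_le_pow_succ k (n + 1)

lemma norm_sigmaD_mul_le (k n : ℕ) :
    ‖(sigmaD k (n + 1) : ℂ) * (n + 1)‖ ≤ 1 * ((n + 1 : ℕ) : ℝ) ^ (k + 2) := by
  rw [norm_mul, pow_succ, ← mul_assoc]
  gcongr
  · exact norm_sigmaD_le k n
  · rw [show ((n : ℂ) + 1) = ((n + 1 : ℕ) : ℂ) by push_cast; ring, Complex.norm_natCast]

/-! ### Eisenstein series, Ramanujan's identities and the eta function -/

lemma sigmaD_eq (k n : ℕ) : sigmaD k n = ArithmeticFunction.sigma k n := by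
  simp [sigmaD, ArithmeticFunction.sigma_apply]

lemma qexp_eq_pow (τ : ℂ) (n : ℕ) :
    Complex.exp (2 * π * I * τ * (n + 1)) = Complex.exp (2 * π * I * τ) ^ (n + 1) := by
  rw [← Complex.exp_nat_mul]; congr 1; push_cast; ring

lemma qSer_sigmaD (k : ℕ) (z : UpperHalfPlane) :
    ∑' n : ℕ, (sigmaD k (n + 1) : ℂ) * Complex.exp (2 * π * I * z * (n + 1))
      = ∑' n : ℕ+, (ArithmeticFunction.sigma k n : ℂ) * Complex.exp (2 * π * I * z) ^ (n : ℕ) := by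
  rw [tsum_pnat_eq_tsum_succ
    (f := fun n => (ArithmeticFunction.sigma k n : ℂ) * Complex.exp (2 * π * I * z) ^ n)]
  simp_rw [sigmaD_eq, qexp_eq_pow]

lemma Eis2_eq (z : UpperHalfPlane) : Eis2 z = EisensteinSeries.E2 z := by
  rw [EisensteinSeries.E2_eq_tsum_cexp, Eis2, qSer_sigmaD]

lemma Eis4_eq (z : UpperHalfPlane) : Eis4 z = ModularForm.E (by norm_num : 3 ≤ 4) z := by
  rw [EisensteinSeries.q_expansion_bernoulli _ ⟨2, rfl⟩, Eis4, qSer_sigmaD,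
    show bernoulli 4 = -1 / 30 by decide +kernel]
  norm_num

lemma Eis6_eq (z : UpperHalfPlane) : Eis6 z = ModularForm.E (by norm_num : 3 ≤ 6) z := by
  rw [EisensteinSeries.q_expansion_bernoulli _ ⟨3, rfl⟩, Eis6, qSer_sigmaD,
    show bernoulli 6 = 1 / 42 by decide +kernel]
  norm_num

lemma im_neg_one_div_pos {τ : ℂ} (hτ : 0 < τ.im) : 0 < (-1 / τ).im := by
  have := UpperHalfPlane.im_inv_neg_coe_pos ⟨τ, hτ⟩
  rwa [inv_neg, ← one_div, ← neg_div] at this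

lemma ne_zero_of_im_pos {τ : ℂ} (hτ : 0 < τ.im) : τ ≠ 0 := by
  rintro rfl; simp at hτ

lemma modularForm_S {k : ℕ} (hk : 3 ≤ k) {τ : ℂ} (hτ : 0 < τ.im) :
    ModularForm.E hk ⟨-1 / τ, im_neg_one_div_pos hτ⟩ = τ ^ k * ModularForm.E hk ⟨τ, hτ⟩ := by
  have h := congr_fun (SlashInvariantForm.slash_action_eqn (ModularForm.E hk)
    (Matrix.SpecialLinearGroup.mapGL ℝ ModularGroup.S) ⟨ModularGroup.S, rfl⟩) ⟨τ, hτ⟩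
  have h' : (SlashAction.map (k : ℤ) ModularGroup.S ⇑(ModularForm.E hk)) ⟨τ, hτ⟩
    = ModularForm.E hk ⟨τ, hτ⟩ := h
  have h0 := ne_zero_of_im_pos hτ
  rw [SlashInvariantForm.slash_S_apply, zpow_neg, zpow_natCast] at h'
  rw [← h', show (⟨-1 / τ, im_neg_one_div_pos hτ⟩ : UpperHalfPlane)
    = .mk _ (UpperHalfPlane.im_inv_neg_coe_pos ⟨τ, hτ⟩) by ext; simp [neg_div, inv_neg]]
  simp only
  field_simp

lemma Eis4_S {τ : ℂ} (hτ : 0 < τ.im) : Eis4 (-1 / τ) = τ ^ 4 * Eis4 τ := by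
  have h := modularForm_S (by norm_num : 3 ≤ 4) hτ
  rwa [← Eis4_eq, ← Eis4_eq] at h

lemma Eis6_S {τ : ℂ} (hτ : 0 < τ.im) : Eis6 (-1 / τ) = τ ^ 6 * Eis6 τ := by
  have h := modularForm_S (by norm_num : 3 ≤ 6) hτ
  rwa [← Eis6_eq, ← Eis6_eq] at h

lemma Eis2_S {τ : ℂ} (hτ : 0 < τ.im) : Eis2 (-1 / τ) = τ ^ 2 * Eis2 τ + 6 / (π * I) * τ := by
  have h := EisensteinSeries.G2_S_transform ⟨τ, hτ⟩
  have h0 := ne_zero_of_im_pos hτ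
  have e1 := Eis2_eq ⟨τ, hτ⟩
  have e2 := Eis2_eq ⟨-1 / τ, im_neg_one_div_pos hτ⟩
  have hS : ModularGroup.S • (⟨τ, hτ⟩ : UpperHalfPlane) = ⟨-1 / τ, im_neg_one_div_pos hτ⟩ := by
    rw [UpperHalfPlane.modular_S_smul]
    ext
    simp [neg_div, inv_neg]
  rw [hS] at h
  simp only [EisensteinSeries.E2, Pi.smul_apply, smul_eq_mul, riemannZeta_two] at e1 e2
  have hpi : (π : ℂ) ≠ 0 := by exact_mod_cast pi_ne_zero
  rw [e1, e2, h]
  field_simp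
  ring_nf
  simp

/-- `(1/2πi) dE₂/dτ`. -/
def DEis2 (τ : ℂ) : ℂ := -24 * qSer (fun n => (sigmaD 1 (n + 1) : ℂ) * (n + 1)) τ

/-- `(1/2πi) dE₄/dτ`. -/
def DEis4 (τ : ℂ) : ℂ := 240 * qSer (fun n => (sigmaD 3 (n + 1) : ℂ) * (n + 1)) τ

lemma Eis2_hasDerivAt {τ : ℂ} (hτ : 0 < τ.im) : HasDerivAt Eis2 (2 * π * I * DEis2 τ) τ := by
  convert! ((qSer_hasDerivAt (norm_sigmaD_le 1) hτ).const_mul 24).const_sub 1 using 1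
  rw [DEis2]; ring

lemma Eis4_hasDerivAt {τ : ℂ} (hτ : 0 < τ.im) : HasDerivAt Eis4 (2 * π * I * DEis4 τ) τ := by
  convert! ((qSer_hasDerivAt (norm_sigmaD_le 3) hτ).const_mul 240).const_add 1 using 1
  rw [DEis4]; ring

lemma Eis6_differentiableAt {τ : ℂ} (hτ : 0 < τ.im) : DifferentiableAt ℂ Eis6 τ :=
  (((qSer_hasDerivAt (norm_sigmaD_le 5) hτ).const_mul 504).const_sub 1).differentiableAt

lemma DEis2_differentiableAt {τ : ℂ} (hτ : 0 < τ.im) : DifferentiableAt ℂ DEis2 τ :=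
  ((qSer_hasDerivAt (norm_sigmaD_mul_le 1) hτ).const_mul (-24)).differentiableAt

lemma DEis4_differentiableAt {τ : ℂ} (hτ : 0 < τ.im) : DifferentiableAt ℂ DEis4 τ :=
  ((qSer_hasDerivAt (norm_sigmaD_mul_le 3) hτ).const_mul 240).differentiableAt

lemma Eis2_T (τ : ℂ) : Eis2 (τ + 1) = Eis2 τ :=
  congrArg (fun x => 1 - 24 * x) (qSer_periodic (fun n => (sigmaD 1 (n + 1) : ℂ)) τ)

lemma Eis4_T (τ : ℂ) : Eis4 (τ + 1) = Eis4 τ :=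
  congrArg (fun x => 1 + 240 * x) (qSer_periodic (fun n => (sigmaD 3 (n + 1) : ℂ)) τ)

lemma Eis6_T (τ : ℂ) : Eis6 (τ + 1) = Eis6 τ :=
  congrArg (fun x => 1 - 504 * x) (qSer_periodic (fun n => (sigmaD 5 (n + 1) : ℂ)) τ)

lemma DEis2_T (τ : ℂ) : DEis2 (τ + 1) = DEis2 τ := by rw [DEis2, qSer_periodic, DEis2]

lemma DEis4_T (τ : ℂ) : DEis4 (τ + 1) = DEis4 τ := by rw [DEis4, qSer_periodic, DEis4]

open Filter Topology in
lemma Eis2_lim : Tendsto Eis2 (comap Complex.im atTop) (𝓝 1) := by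
  have := ((qSer_tendsto (norm_sigmaD_le 1)).const_mul 24).const_sub 1
  rw [mul_zero, sub_zero] at this
  exact this

open Filter Topology in
lemma Eis4_lim : Tendsto Eis4 (comap Complex.im atTop) (𝓝 1) := by
  have := ((qSer_tendsto (norm_sigmaD_le 3)).const_mul 240).const_add 1
  rw [mul_zero, add_zero] at this
  exact this

open Filter Topology in
lemma Eis6_lim : Tendsto Eis6 (comap Complex.im atTop) (𝓝 1) := by
  have := ((qSer_tendsto (norm_sigmaD_le 5)).const_mul 504).const_sub 1
  rw [mul_zero, sub_zero] at this
  exact this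

open Filter Topology in
lemma DEis2_lim : Tendsto DEis2 (comap Complex.im atTop) (𝓝 0) := by
  have := (qSer_tendsto (norm_sigmaD_mul_le 1)).const_mul (-24)
  rw [mul_zero] at this
  exact this

open Filter Topology in
lemma DEis4_lim : Tendsto DEis4 (comap Complex.im atTop) (𝓝 0) := by
  have := (qSer_tendsto (norm_sigmaD_mul_le 3)).const_mul 240
  rw [mul_zero] at this
  exact this

open Filter Topology in
lemma eventually_im_pos {τ : ℂ} (hτ : 0 < τ.im) : ∀ᶠ w : ℂ in 𝓝 τ, 0 < w.im :=
  (isOpen_lt continuous_const Complex.continuous_im).mem_nhds hτ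

lemma hasDerivAt_neg_one_div {τ : ℂ} (h0 : τ ≠ 0) :
    HasDerivAt (fun w : ℂ => -1 / w) (1 / τ ^ 2) τ := by
  have h := (hasDerivAt_inv h0).neg
  simp only [neg_neg] at h
  convert! h using 1
  · ext w; simp [neg_div]
  · simp

lemma DEis2_S {τ : ℂ} (hτ : 0 < τ.im) :
    DEis2 (-1 / τ) = τ ^ 4 * DEis2 τ + τ ^ 3 / (π * I) * Eis2 τ + 3 / (π * I) ^ 2 * τ ^ 2 := by
  have h0 := ne_zero_of_im_pos hτ
  have hpi : (π : ℂ) ≠ 0 := by exact_mod_cast pi_ne_zero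
  have h1 := (Eis2_hasDerivAt (im_neg_one_div_pos hτ)).comp τ (hasDerivAt_neg_one_div h0)
  have h2 := ((hasDerivAt_pow 2 τ).mul (Eis2_hasDerivAt hτ)).add
    ((hasDerivAt_id τ).const_mul (6 / (π * I)))
  have h3 := (h2.congr_of_eventuallyEq ((eventually_im_pos hτ).mono fun w hw => Eis2_S hw)).unique h1
  simp only [Nat.cast_ofNat, Nat.add_one_sub_one, pow_one] at h3
  have hI := I_ne_zero
  field_simp at h3 ⊢
  linear_combination -h3 / 2

lemma DEis4_S {τ : ℂ} (hτ : 0 < τ.im) :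
    DEis4 (-1 / τ) = τ ^ 6 * DEis4 τ + 2 * τ ^ 5 / (π * I) * Eis4 τ := by
  have h0 := ne_zero_of_im_pos hτ
  have hpi : (π : ℂ) ≠ 0 := by exact_mod_cast pi_ne_zero
  have h1 := (Eis4_hasDerivAt (im_neg_one_div_pos hτ)).comp τ (hasDerivAt_neg_one_div h0)
  have h2 := ((hasDerivAt_pow 4 τ).mul (Eis4_hasDerivAt hτ))
  have h3 := (h2.congr_of_eventuallyEq ((eventually_im_pos hτ).mono fun w hw => Eis4_S hw)).unique h1
  simp only [Nat.cast_ofNat, Nat.add_one_sub_one] at h3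
  have hI := I_ne_zero
  field_simp at h3 ⊢
  linear_combination -h3 / 2

open Filter Topology in
/-- Ramanujan's identity for `E₂`. -/
lemma DEis2_eq {τ : ℂ} (hτ : 0 < τ.im) : DEis2 τ = (Eis2 τ ^ 2 - Eis4 τ) / 12 := by
  have hpi : (π : ℂ) ≠ 0 := by exact_mod_cast pi_ne_zero
  have := eq_zero_of_cusp (k := 4) (by norm_num)
    (fun w => DEis2 w - (Eis2 w ^ 2 - Eis4 w) / 12)
    (fun w hw => (DEis2_differentiableAt hw).sub
      ((((Eis2_hasDerivAt hw).differentiableAt.pow 2).sub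
        (Eis4_hasDerivAt hw).differentiableAt).div_const 12))
    (fun w _ => by simp only [DEis2_T, Eis2_T, Eis4_T])
    (fun w hw => ?_) ?_ hτ
  · exact sub_eq_zero.mp this
  · have h0 := ne_zero_of_im_pos hw
    have hI := I_ne_zero
    simp only [DEis2_S hw, Eis2_S hw, Eis4_S hw]
    rw [show (4 : ℤ) = ((4 : ℕ) : ℤ) by rfl, zpow_natCast]
    field_simp
    ring
  · simpa using DEis2_lim.sub (((Eis2_lim.pow 2).sub Eis4_lim).div_const 12)

open Filter Topology in
/-- Ramanujan's identity for `E₄`. -/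
lemma DEis4_eq {τ : ℂ} (hτ : 0 < τ.im) : DEis4 τ = (Eis2 τ * Eis4 τ - Eis6 τ) / 3 := by
  have hpi : (π : ℂ) ≠ 0 := by exact_mod_cast pi_ne_zero
  have := eq_zero_of_cusp (k := 6) (by norm_num)
    (fun w => DEis4 w - (Eis2 w * Eis4 w - Eis6 w) / 3)
    (fun w hw => (DEis4_differentiableAt hw).sub
      ((((Eis2_hasDerivAt hw).differentiableAt.mul (Eis4_hasDerivAt hw).differentiableAt).sub
        (Eis6_differentiableAt hw)).div_const 3))
    (fun w _ => by simp only [DEis4_T, Eis2_T, Eis4_T, Eis6_T])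
    (fun w hw => ?_) ?_ hτ
  · exact sub_eq_zero.mp this
  · have h0 := ne_zero_of_im_pos hw
    have hI := I_ne_zero
    simp only [DEis4_S hw, Eis2_S hw, Eis4_S hw, Eis6_S hw]
    rw [show (6 : ℤ) = ((6 : ℕ) : ℤ) by rfl, zpow_natCast]
    field_simp
    ring
  · simpa using DEis4_lim.sub (((Eis2_lim.mul Eis4_lim).sub Eis6_lim).div_const 3)

lemma etaD_eq : etaD = ModularForm.eta := by
  ext τ
  unfold etaD ModularForm.eta
  simp_rw [ModularForm.eta_q_eq_cexp]
  congr 1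
  · rw [Function.Periodic.qParam]; congr 1; push_cast; ring
  · refine tprod_congr fun n => ?_
    congr 2; ring

lemma etaD_ne_zero {τ : ℂ} (hτ : 0 < τ.im) : etaD τ ≠ 0 := by
  rw [etaD_eq]; exact ModularForm.eta_ne_zero hτ

lemma etaD_hasDerivAt {τ : ℂ} (hτ : 0 < τ.im) :
    HasDerivAt etaD (2 * π * I * (Eis2 τ / 24 * etaD τ)) τ := by
  have h0 := etaD_ne_zero hτ
  rw [etaD_eq] at h0 ⊢
  have h := ModularForm.logDeriv_eta_eq_E2 ⟨τ, hτ⟩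
  rw [← Eis2_eq, logDeriv_apply, div_eq_iff h0] at h
  convert! (ModularForm.differentiableAt_eta_of_mem_upperHalfPlaneSet hτ).hasDerivAt using 1
  simp only at h
  rw [h]; ring

/-! ### The theta constant of weight 3/2 -/

lemma neg_one_zpow_eq_exp (n : ℤ) : (-1 : ℂ) ^ n = Complex.exp (π * I * n) := by
  rw [← Complex.exp_pi_mul_I, ← Complex.exp_int_mul]; congr 1; ring

lemma thT_eq_jacobiTheta₂ (τ z : ℂ) :
    thT 0 τ z = Complex.exp (π * I * τ / 4 + π * I * z) * jacobiTheta₂ (z + 1 / 2 + τ / 2) τ := by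
  unfold thT jacobiTheta₂ jacobiTheta₂_term thTerm
  rw [← tsum_mul_left]
  refine tsum_congr fun n => ?_
  rw [neg_one_zpow_eq_exp, pow_zero, one_mul, ← Complex.exp_add, ← Complex.exp_add]
  congr 1
  push_cast
  ring

/-- The transformation of `ϑ` under `τ ↦ −1/τ`, from Mathlib's functional equation for `jacobiTheta₂`. -/
lemma thT_zero_S {τ : ℂ} (hτ : 0 < τ.im) (z : ℂ) :
    thT 0 τ z = 1 / (-I * τ) ^ (1 / 2 : ℂ) * Complex.exp (π * I / 2 - π * I * z ^ 2 / τ)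
      * thT 0 (-1 / τ) (z / τ) := by
  have h0 := ne_zero_of_im_pos hτ
  have h1 := jacobiTheta₂_functional_equation (z + 1 / 2 + τ / 2) τ
  have h2 := jacobiTheta₂_add_left' ((z + 1 / 2 + τ / 2) / τ) (-1 / τ)
  rw [thT_eq_jacobiTheta₂, thT_eq_jacobiTheta₂, h1,
    show z / τ + 1 / 2 + -1 / τ / 2 = (z + 1 / 2 + τ / 2) / τ + -1 / τ by field_simp; ring, h2]
  have key : ∀ a b c d e f g : ℂ, a + c = e + f + g →
      Complex.exp a * (b * Complex.exp c * d)
        = b * Complex.exp e * (Complex.exp f * (Complex.exp g * d)) := by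
    intro a b c d e f g h
    have := congrArg Complex.exp h
    simp only [Complex.exp_add] at this
    linear_combination b * d * this
  apply key
  field_simp
  ring

/-- Differentiating `thT_zero_S` at `z = 0`; the eighth power removes the square root and the root of
unity. -/
lemma thT_one_S {τ : ℂ} (hτ : 0 < τ.im) :
    thT 1 (-1 / τ) 0 ^ 8 = τ ^ 12 * thT 1 τ 0 ^ 8 := by
  have h0 := ne_zero_of_im_pos hτ
  set A := (-I * τ) ^ (1 / 2 : ℂ) with hA
  have hA2 : A ^ 2 = -I * τ := by
    rw [hA, ← Complex.cpow_nat_mul]; norm_num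
  have hA0 : A ≠ 0 := by
    intro h; rw [h] at hA2
    have : -I * τ ≠ 0 := mul_ne_zero (neg_ne_zero.mpr I_ne_zero) h0
    exact this (by rw [← hA2]; norm_num)
  have hl := thT_hasDerivAt_z 0 hτ 0
  have hdiv : HasDerivAt (fun z : ℂ => z / τ) (1 / τ) 0 := (hasDerivAt_id (0 : ℂ)).div_const τ
  have hr1 := (thT_hasDerivAt_z 0 (im_neg_one_div_pos hτ) (0 / τ)).comp (0 : ℂ) hdiv
  have he : HasDerivAt (fun z : ℂ => 1 / A * Complex.exp (π * I / 2 - π * I * z ^ 2 / τ)) 0 0 := by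
    have h1 : HasDerivAt (fun z : ℂ => π * I / 2 - π * I * z ^ 2 / τ) 0 0 := by
      have := (((hasDerivAt_pow 2 (0 : ℂ)).const_mul (π * I)).div_const τ).const_sub (π * I / 2)
      simpa using this
    simpa using h1.cexp.const_mul (1 / A)
  have hr := he.mul hr1
  have heq : thT 0 τ = (fun z : ℂ => 1 / A * Complex.exp (π * I / 2 - π * I * z ^ 2 / τ))
      * (thT 0 (-1 / τ) ∘ fun z => z / τ) := by
    ext z; exact thT_zero_S hτ z
  rw [← heq] at hr
  have h := hl.unique hr
  have hexp : Complex.exp (π * I / 2) = I := by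
    rw [show (π * I / 2 : ℂ) = π / 2 * I by ring]; exact Complex.exp_pi_div_two_mul_I
  have hpi : (π : ℂ) ≠ 0 := by exact_mod_cast pi_ne_zero
  have hI := I_ne_zero
  simp only [zero_mul, zero_add, zero_div, ne_eq, OfNat.ofNat_ne_zero, not_false_eq_true, zero_pow,
    mul_zero, sub_zero, hexp] at h
  have h' : A * τ * thT 1 τ 0 = I * thT 1 (-1 / τ) 0 := by
    field_simp at h
    simp only [neg_div]
    linear_combination h
  have h8 := congrArg (· ^ 8) h'
  simp only [mul_pow] at h8
  rw [show A ^ 8 = (A ^ 2) ^ 4 by ring, hA2, mul_pow, show I ^ 8 = (I ^ 4) ^ 2 by ring, neg_pow, I_pow_four] at h8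
  linear_combination -h8

lemma thT_one_T (τ : ℂ) : thT 1 (τ + 1) 0 ^ 8 = thT 1 τ 0 ^ 8 := by
  have h : thT 1 (τ + 1) 0 = Complex.exp (π * I / 4) * thT 1 τ 0 := by
    unfold thT
    rw [← tsum_mul_left]
    refine tsum_congr fun n => ?_
    unfold thTerm
    have : Complex.exp (π * I * (n * (n + 1))) = 1 := by
      obtain ⟨m, hm⟩ := Int.even_mul_succ_self n
      have hm' : (n : ℂ) * (n + 1) = m + m := by exact_mod_cast hm
      rw [hm', Complex.exp_eq_one_iff]
      exact ⟨m, by ring⟩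
    rw [show (π * I * (τ + 1) * (n + (1 / 2 : ℝ)) ^ 2 + 2 * π * I * (n + (1 / 2 : ℝ)) * 0 : ℂ)
      = π * I / 4 + (π * I * τ * (n + (1 / 2 : ℝ)) ^ 2 + 2 * π * I * (n + (1 / 2 : ℝ)) * 0)
        + π * I * (n * (n + 1)) by push_cast; ring, Complex.exp_add, this, Complex.exp_add]
    ring
  rw [h, mul_pow, ← Complex.exp_nat_mul, show ((8 : ℕ) * (π * I / 4) : ℂ) = 2 * π * I by push_cast; ring,
    Complex.exp_two_pi_mul_I, one_mul]

open Filter Topology in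
/-- `T₁(τ,0) ∼ q^{1/8}` as `Im τ → ∞`: the indices `n = 0` and `n = −1` each contribute `1/2`. -/
lemma thT_one_lim :
    Tendsto (fun τ => Complex.exp (-(π * I * τ / 4)) * thT 1 τ 0) (comap Complex.im atTop) (𝓝 1) := by
  have hterm : ∀ (τ : ℂ) (n : ℤ), Complex.exp (-(π * I * τ / 4)) * ((-1) ^ n * thTerm (1 / 2) 1 τ 0 n)
      = (-1) ^ n * (n + 1 / 2) * Complex.exp (π * I * τ * (n * (n + 1) : ℤ)) := by
    intro τ n
    unfold thTerm
    rw [show ∀ a b c d : ℂ, a * (b * (c * d)) = b * c * (a * d) by intros; ring, ← Complex.exp_add]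
    congr 1
    · push_cast; ring
    · congr 1; push_cast; ring
  have hnorm : ∀ (τ : ℂ) (n : ℤ), ‖Complex.exp (π * I * τ * (n * (n + 1) : ℤ))‖
      = Real.exp (-π * (n * (n + 1) : ℤ) * τ.im) := by
    intro τ n
    rw [Complex.norm_exp]
    congr 1
    rw [show (π * I * τ * (n * (n + 1) : ℤ) : ℂ) = ((π * (n * (n + 1) : ℤ) : ℝ) : ℂ) * (I * τ) by
      push_cast; ring, Complex.re_ofReal_mul]
    simp
  have hnn : ∀ n : ℤ, 0 ≤ n * (n + 1) := fun n => by
    rcases le_or_gt 0 n with h | h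
    · positivity
    · nlinarith
  have := tendsto_tsum_of_dominated_convergence (𝓕 := comap Complex.im atTop)
    (f := fun τ (n : ℤ) => Complex.exp (-(π * I * τ / 4)) * ((-1) ^ n * thTerm (1 / 2) 1 τ 0 n))
    (g := fun n : ℤ => if n = 0 ∨ n = -1 then (1 / 2 : ℂ) else 0)
    (bound := fun n => ‖Complex.exp (-(π * I * I / 4)) * ((-1) ^ n * thTerm (1 / 2) 1 I 0 n)‖)
    ?_ (fun n => ?_) ?_
  · have hs : ∑' n : ℤ, (if n = 0 ∨ n = -1 then (1 / 2 : ℂ) else 0) = 1 := by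
      rw [tsum_eq_sum (s := {0, -1})]
      · norm_num
      · intro b hb
        simp only [Finset.mem_insert, Finset.mem_singleton] at hb
        rw [if_neg hb]
    rw [hs] at this
    simp_rw [tsum_mul_left] at this
    exact this
  · simp_rw [norm_mul]
    refine Summable.mul_left _ ?_
    simpa using thTerm_summable (s := 1 / 2) (by norm_num) le_rfl 1 (τ := I) (by simp) 0
  · simp_rw [hterm]
    split_ifs with h
    · rcases h with rfl | rfl <;> norm_num <;> exact tendsto_const_nhds
    · rw [tendsto_zero_iff_norm_tendsto_zero]
      simp_rw [norm_mul _ (Complex.exp _), hnorm]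
      have hpos : 0 < n * (n + 1) := by
        refine lt_of_le_of_ne (hnn n) (Ne.symm ?_)
        intro h'
        rcases mul_eq_zero.mp h' with h' | h' <;> omega
      have hpos' : (0 : ℝ) < (n * (n + 1) : ℤ) := by exact_mod_cast hpos
      rw [← mul_zero ‖(-1 : ℂ) ^ n * (n + 1 / 2)‖]
      refine Tendsto.const_mul _ (Real.tendsto_exp_atBot.comp ?_)
      exact Tendsto.const_mul_atTop_of_neg (by nlinarith [pi_pos]) tendsto_comap
  · filter_upwards [preimage_mem_comap (Ici_mem_atTop (1 : ℝ))] with τ hτ n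
    rw [hterm, hterm, norm_mul _ (Complex.exp _), norm_mul _ (Complex.exp _), hnorm, hnorm]
    refine mul_le_mul_of_nonneg_left (Real.exp_le_exp.mpr ?_) (norm_nonneg _)
    have h1 : (0 : ℝ) ≤ (n * (n + 1) : ℤ) := by exact_mod_cast hnn n
    have hτ' : 1 ≤ τ.im := hτ
    have := mul_nonneg (mul_nonneg pi_pos.le h1) (sub_nonneg.mpr hτ')
    rw [I_im]
    linarith

open Filter Topology in
lemma comap_im_neBot : (comap Complex.im atTop).NeBot := by
  refine comap_neBot fun s hs => ?_
  obtain ⟨a, ha⟩ := (atTop_basis.mem_iff.mp hs)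
  exact ⟨a * I, ha.2 (by simp)⟩

open Filter Topology in
/-- A form of Jacobi's identity `T₁(τ,0) = η(τ)³`; only the eighth power, up to a constant, is needed. -/
lemma thT_one_pow_eq : ∃ c : ℂ, c ≠ 0 ∧ ∀ τ : ℂ, 0 < τ.im → thT 1 τ 0 ^ 8 = c * etaD τ ^ 24 := by
  have h0 : Tendsto (fun τ => thT 1 τ 0 ^ 8) (comap Complex.im atTop) (𝓝 0) := by
    have h1 : Tendsto (fun τ : ℂ => Complex.exp (π * I * τ / 4)) (comap Complex.im atTop) (𝓝 0) := by
      rw [tendsto_zero_iff_norm_tendsto_zero]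
      have : ∀ τ : ℂ, ‖Complex.exp (π * I * τ / 4)‖ = Real.exp (-(π / 4) * τ.im) := by
        intro τ
        rw [Complex.norm_exp, show (π * I * τ / 4 : ℂ) = ((π / 4 : ℝ) : ℂ) * (I * τ) by
          push_cast; ring, Complex.re_ofReal_mul]
        simp
      simp_rw [this]
      refine Real.tendsto_exp_atBot.comp ?_
      exact Tendsto.const_mul_atTop_of_neg (by linarith [pi_pos]) tendsto_comap
    have h2 := (h1.mul thT_one_lim).pow 8
    simp only [← mul_assoc, ← Complex.exp_add, add_neg_cancel, Complex.exp_zero, one_mul,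
      zero_mul] at h2
    simpa using h2
  obtain ⟨c, hc⟩ := eq_smul_eta_of_cusp (fun τ => thT 1 τ 0 ^ 8)
    (fun τ hτ => ((thT_hasDerivAt_τ 1 hτ 0).differentiableAt.pow 8))
    (fun τ _ => thT_one_T τ)
    (fun τ hτ => by
      rw [thT_one_S hτ, show (12 : ℤ) = ((12 : ℕ) : ℤ) by rfl, zpow_natCast]) h0
  refine ⟨c, ?_, fun τ hτ => by rw [etaD_eq]; exact hc τ hτ⟩
  rintro rfl
  have hne := comap_im_neBot
  have h : (fun τ => Complex.exp (-(π * I * τ / 4)) * thT 1 τ 0) =ᶠ[comap Complex.im atTop]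
      fun _ => 0 := by
    filter_upwards [preimage_mem_comap (Ioi_mem_atTop (0 : ℝ))] with τ hτ
    have := hc τ hτ
    rw [zero_mul] at this
    rw [pow_eq_zero_iff (by norm_num) |>.mp this, mul_zero]
  exact one_ne_zero (tendsto_nhds_unique (thT_one_lim.congr' h) tendsto_const_nhds)

lemma thT_one_ne_zero {τ : ℂ} (hτ : 0 < τ.im) : thT 1 τ 0 ≠ 0 := by
  obtain ⟨c, hc0, hc⟩ := thT_one_pow_eq
  intro h
  have := hc τ hτ
  rw [h, zero_pow (by norm_num)] at this
  exact mul_ne_zero hc0 (pow_ne_zero 24 (etaD_ne_zero hτ)) this.symm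

/-- The logarithmic `τ`-derivative of `T₁(τ,0)^8 = c η²⁴`. -/
lemma thT_three_zero {τ : ℂ} (hτ : 0 < τ.im) : thT 3 τ 0 = Eis2 τ / 4 * thT 1 τ 0 := by
  obtain ⟨c, -, hc⟩ := thT_one_pow_eq
  have h1 := (thT_hasDerivAt_τ 1 hτ 0).pow 8
  have h2 := ((etaD_hasDerivAt hτ).pow 24).const_mul c
  have h3 := (h2.congr_of_eventuallyEq
    ((eventually_im_pos hτ).mono fun w hw => hc w hw)).unique h1
  have hpi : (π : ℂ) ≠ 0 := by exact_mod_cast pi_ne_zero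
  have ht := thT_one_ne_zero hτ
  have h4 : (8 * π * I * thT 1 τ 0 ^ 7) * thT 3 τ 0
      = (8 * π * I * thT 1 τ 0 ^ 7) * (Eis2 τ / 4 * thT 1 τ 0) := by
    have := hc τ hτ
    simp only [Nat.cast_ofNat, Nat.add_one_sub_one] at h3
    linear_combination -h3 - 2 * π * I * Eis2 τ * this
  refine mul_left_cancel₀ ?_ h4
  simp [hpi, ht]

/-- The `τ`-derivative of `thT_three_zero`. -/
lemma thT_five_zero {τ : ℂ} (hτ : 0 < τ.im) :
    thT 5 τ 0 = DEis2 τ / 2 * thT 1 τ 0 + Eis2 τ / 4 * thT 3 τ 0 := by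
  have h1 := thT_hasDerivAt_τ 3 hτ 0
  have h2 := ((Eis2_hasDerivAt hτ).div_const 4).mul (thT_hasDerivAt_τ 1 hτ 0)
  have h3 := (h2.congr_of_eventuallyEq
    ((eventually_im_pos hτ).mono fun w hw => thT_three_zero hw)).unique h1
  have hpi : (π : ℂ) ≠ 0 := by exact_mod_cast pi_ne_zero
  have hI := I_ne_zero
  refine mul_left_cancel₀ (mul_ne_zero hpi hI) ?_
  linear_combination -h3

/-- The relation equivalent to `H_0 φ_{0,1} = −(5/2) E₄ φ_{−2,1}` once `E₂'` is eliminated by Ramanujan's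
identity. -/
lemma thT_relation {τ : ℂ} (hτ : 0 < τ.im) (z : ℂ) :
    -108 * thT 2 τ z ^ 2 - 36 * (thT 0 τ z * thT 4 τ z) + 144 * (thT 1 τ z * thT 3 τ z)
      + 36 * Eis2 τ * (thT 0 τ z * thT 2 τ z - thT 1 τ z ^ 2)
      + 3 / 2 * (Eis4 τ - Eis2 τ ^ 2) * thT 0 τ z ^ 2 = 0 := by
  refine theta_quartic hτ (Eis2 τ) (3 / 2 * (Eis4 τ - Eis2 τ ^ 2)) (thT_one_ne_zero hτ)
    (thT_three_zero hτ) ?_ z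
  rw [thT_five_zero hτ, thT_three_zero hτ, DEis2_eq hτ]
  ring

/-! ### The heat operator on `φ_{0,1}` -/

lemma deriv_thetaJ {τ : ℂ} (hτ : 0 < τ.im) : deriv (thetaJ τ) = fun z => 2 * π * I * thT 1 τ z := by
  rw [show thetaJ τ = thT 0 τ from funext (thetaJ_eq τ)]
  exact funext fun z => (thT_hasDerivAt_z 0 hτ z).deriv

lemma phi01_eq {τ : ℂ} (hτ : 0 < τ.im) (z : ℂ) :
    phi01 τ z = (-12 * (thT 0 τ z * thT 2 τ z - thT 1 τ z ^ 2) + Eis2 τ * thT 0 τ z ^ 2)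
      / etaD τ ^ 6 := by
  have hpi : (π : ℂ) ≠ 0 := by exact_mod_cast pi_ne_zero
  have h0 := etaD_ne_zero hτ
  rw [phi01, deriv_thetaJ hτ, ((thT_hasDerivAt_z 1 hτ z).const_mul (2 * π * I)).deriv, thetaJ_eq]
  field_simp
  simp only [I_sq]
  ring

/-- The modular heat operator of index `1` applied to `P / η⁶`, where
`A = (1/2πi) ∂P/∂τ`, `B = (1/2πi) ∂P/∂z` and `C = (1/2πi) ∂B/∂z`. -/
lemma heatMod_div_eta {φ P : ℂ → ℂ → ℂ} {B : ℂ → ℂ} {A C τ z : ℂ} (k : ℚ) (hτ : 0 < τ.im)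
    (hφ : ∀ w : ℂ, 0 < w.im → ∀ u, φ w u = P w u / etaD w ^ 6)
    (hA : HasDerivAt (fun w => P w z) (2 * π * I * A) τ)
    (hB : ∀ u, HasDerivAt (P τ) (2 * π * I * B u) u)
    (hC : HasDerivAt B (2 * π * I * C) z) :
    heatMod 1 k φ τ z
      = (12 * A - 3 * C - ((2 * k - 1) / 2 + 3) * Eis2 τ * P τ z) / etaD τ ^ 6 := by
  have hpi : (π : ℂ) ≠ 0 := by exact_mod_cast pi_ne_zero
  have hI := I_ne_zero
  have h0 := etaD_ne_zero hτ
  have h1 : deriv (fun w => φ w z) τ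
      = 2 * π * I * ((A - Eis2 τ / 4 * P τ z) / etaD τ ^ 6) := by
    have h := hA.div ((etaD_hasDerivAt hτ).pow 6) (pow_ne_zero 6 h0)
    rw [(h.congr_of_eventuallyEq ((eventually_im_pos hτ).mono fun w hw => hφ w hw z)).deriv]
    simp only [Pi.pow_apply, Nat.cast_ofNat, Nat.add_one_sub_one]
    field_simp
    ring
  have h2 : deriv (deriv (φ τ)) z = (2 * π * I) ^ 2 * (C / etaD τ ^ 6) := by
    have hd : deriv (φ τ) = fun u => 2 * π * I * B u / etaD τ ^ 6 := by
      rw [show φ τ = fun u => P τ u / etaD τ ^ 6 from funext (hφ τ hτ)]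
      exact funext fun u => ((hB u).div_const _).deriv
    rw [hd, ((hC.const_mul (2 * π * I)).div_const _).deriv]
    ring
  rw [heatMod, heatOp, h1, h2, hφ τ hτ z]
  push_cast
  field_simp
  simp only [I_sq]
  ring

/-- `H_0 φ_{0,1} = −(5/2) E₄ φ_{−2,1}`. -/
lemma heatMod_phi01 {τ : ℂ} (hτ : 0 < τ.im) (z : ℂ) :
    heatMod 1 0 phi01 τ z = (-5 / 2 * Eis4 τ * thT 0 τ z ^ 2) / etaD τ ^ 6 := by
  have hz := fun k u => thT_hasDerivAt_z k hτ u
  have ht := fun k => thT_hasDerivAt_τ k hτ z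
  rw [heatMod_div_eta
    (P := fun τ z => -12 * (thT 0 τ z * thT 2 τ z - thT 1 τ z ^ 2) + Eis2 τ * thT 0 τ z ^ 2)
    (A := -6 * (thT 2 τ z ^ 2 + thT 0 τ z * thT 4 τ z - 2 * thT 1 τ z * thT 3 τ z)
      + DEis2 τ * thT 0 τ z ^ 2 + Eis2 τ * thT 0 τ z * thT 2 τ z)
    (B := fun u => -12 * (thT 0 τ u * thT 3 τ u - thT 1 τ u * thT 2 τ u)
      + 2 * Eis2 τ * (thT 0 τ u * thT 1 τ u))
    (C := -12 * (thT 0 τ z * thT 4 τ z - thT 2 τ z ^ 2)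
      + 2 * Eis2 τ * (thT 1 τ z ^ 2 + thT 0 τ z * thT 2 τ z)) 0 hτ (fun w hw u => phi01_eq hw u)]
  · congr 1
    simp only [DEis2_eq hτ]
    push_cast
    linear_combination thT_relation hτ z
  · convert! ((((ht 0).mul (ht 2)).sub ((ht 1).pow 2)).const_mul (-12)).add
      ((Eis2_hasDerivAt hτ).mul ((ht 0).pow 2)) using 1
    simp
    ring
  · intro u
    convert! ((((hz 0 u).mul (hz 2 u)).sub ((hz 1 u).pow 2)).const_mul (-12)).add
      (((hz 0 u).pow 2).const_mul (Eis2 τ)) using 1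
    simp
    ring
  · convert! ((((hz 0 z).mul (hz 3 z)).sub ((hz 1 z).mul (hz 2 z))).const_mul (-12)).add
      (((hz 0 z).mul (hz 1 z)).const_mul (2 * Eis2 τ)) using 1
    ring

/-- `H^{(1)}_{2}(H^{(1)}_{0}(φ_{0,1})) = 10·E₆·φ_{−2,1} + (5/4)·E₄·φ_{0,1}`
on `ℍ × ℂ`. -/
theorem statement5 (τ z : ℂ) (hτ : 0 < τ.im) :
    heatMod 1 2 (heatMod 1 0 phi01) τ z
      = 10 * Eis6 τ * phim21 τ z + (5/4) * Eis4 τ * phi01 τ z := by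
  have hz := fun k u => thT_hasDerivAt_z k hτ u
  have ht := fun k => thT_hasDerivAt_τ k hτ z
  rw [heatMod_div_eta (P := fun τ z => -5 / 2 * Eis4 τ * thT 0 τ z ^ 2)
    (A := -5 / 2 * (DEis4 τ * thT 0 τ z ^ 2 + Eis4 τ * (thT 0 τ z * thT 2 τ z)))
    (B := fun u => -5 * Eis4 τ * (thT 0 τ u * thT 1 τ u))
    (C := -5 * Eis4 τ * (thT 1 τ z ^ 2 + thT 0 τ z * thT 2 τ z)) 2 hτ
    (fun w hw u => heatMod_phi01 hw u)]
  · rw [phi01_eq hτ, phim21, thetaJ_eq, mul_div_assoc', mul_div_assoc', ← add_div]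
    congr 1
    simp only [DEis4_eq hτ]
    push_cast
    ring
  · convert! ((Eis4_hasDerivAt hτ).const_mul (-5 / 2)).mul ((ht 0).pow 2) using 1
    simp
    ring
  · intro u
    convert! ((hz 0 u).pow 2).const_mul (-5 / 2 * Eis4 τ) using 1
    simp
    ring
  · convert! ((hz 0 z).mul (hz 1 z)).const_mul (-5 * Eis4 τ) using 1
    ring
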